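/- (Claim 2, combinatorial core.) Let W ⊆ ℕ be any set such that for every k ∈ ℕ it is not the case that both 2k−1 ∈ W and 2k ∈ W. Then it is impossible that μ₀(W) = 1 and μ*(W) = 1 simultaneously. Consequently μ(W) < 1 for every such W. -/

import Mathlib

/-!
If `μ₀(W) = 1`, then `A = W ∩ E₀` has `φ(A) = 1/2`. Its translate `A + 1` consists of even numbers
and, by the hypothesis on `W`, misses `W`. For `n ≥ 1` the sets `A + 1` and `W ∩ Eₙ` are therefore
disjoint subsets of `E₁`, so `φ(W ∩ Eₙ) ≤ φ(E₁) - φ(A + 1) = 1/2 - φ(A) = 0`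
(`phi_inter_E_add_le`). Hence `μₙ(W) ≤ 0` for all `n ≥ 1`, and the cluster point satisfies
`μ*(W) ≤ 0`. The strict inequality `μ(W) < 1` follows since `μ₀(W) ≤ 1` and `μ*(W) ≤ 1` always.
-/

open Filter Topology

/-- A charge (finitely additive probability measure) on ℕ. -/
def IsCharge (μ : Set ℕ → ℝ) : Prop :=
  μ ∅ = 0 ∧ μ Set.univ = 1 ∧ (∀ M : Set ℕ, 0 ≤ μ M) ∧
    ∀ M₁ M₂ : Set ℕ, Disjoint M₁ M₂ → μ (M₁ ∪ M₂) = μ M₁ + μ M₂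

/-- A diffuse charge: every singleton has measure zero. -/
def IsDiffuse (μ : Set ℕ → ℝ) : Prop :=
  IsCharge μ ∧ ∀ n : ℕ, μ {n} = 0

/-- Translation invariance: `μ(M) = μ(M + 1)` where `M + 1 = {n + 1 : n ∈ M}`. -/
def IsTransInv (μ : Set ℕ → ℝ) : Prop :=
  ∀ M : Set ℕ, μ M = μ ((· + 1) '' M)

/-- `E 0` is the set of odd numbers `{1,3,5,...}`; for `n ≥ 1`,
`E n = {k · 2ⁿ : k ≥ 1}`. -/
def E : ℕ → Set ℕ
  | 0 => {m | Odd m}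
  | n + 1 => {m | ∃ k : ℕ, 1 ≤ k ∧ m = k * 2 ^ (n + 1)}

/-- `μ₀(W) = 2 · φ(W ∩ E₀)`. -/
noncomputable def mu0 (φ : Set ℕ → ℝ) (W : Set ℕ) : ℝ := 2 * φ (W ∩ E 0)

/-- `μₙ(W) = 2ⁿ · φ(W ∩ Eₙ)`. -/
noncomputable def muN (φ : Set ℕ → ℝ) (n : ℕ) (W : Set ℕ) : ℝ := 2 ^ n * φ (W ∩ E n)

/-- A set of stages is admissible if for every `k ≥ 1` exactly one of `2k - 1`
and `2k` belongs to it. -/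
def Admissible (W : Set ℕ) : Prop :=
  ∀ k : ℕ, 1 ≤ k → Xor' (2 * k - 1 ∈ W) (2 * k ∈ W)

theorem IsCharge.mono {φ : Set ℕ → ℝ} (hφ : IsCharge φ) {A B : Set ℕ} (h : A ⊆ B) :
    φ A ≤ φ B := by
  have h1 := hφ.2.2.2 A (B \ A) Set.disjoint_sdiff_right
  rw [Set.union_sdiff_cancel h] at h1
  linarith [hφ.2.2.1 (B \ A)]

theorem E_succ_subset_E_one (n : ℕ) : E (n + 1) ⊆ E 1 := by
  rintro m ⟨k, hk, rfl⟩
  exact ⟨k * 2 ^ n, Nat.mul_pos hk (by positivity), by ring⟩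

/-- The translate of `W ∩ E 0` by one and `W ∩ E (n + 1)` are disjoint subsets of `E 1`. -/
theorem phi_inter_E_add_le {φ : Set ℕ → ℝ} (hφ : IsCharge φ) (hφt : IsTransInv φ) {W : Set ℕ}
    (hW : ∀ k : ℕ, 1 ≤ k → ¬(2 * k - 1 ∈ W ∧ 2 * k ∈ W)) (n : ℕ) :
    φ (W ∩ E 0) + φ (W ∩ E (n + 1)) ≤ φ (E 1) := by
  have hdisj : Disjoint ((· + 1) '' (W ∩ E 0)) (W ∩ E (n + 1)) := by
    rw [Set.disjoint_left]
    rintro _ ⟨m, ⟨hmW, j, rfl⟩, rfl⟩ ⟨hW', -⟩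
    exact hW (j + 1) (by omega) ⟨hmW, hW'⟩
  rw [hφt (W ∩ E 0), ← hφ.2.2.2 _ _ hdisj]
  refine hφ.mono (Set.union_subset ?_ fun m hm => E_succ_subset_E_one n hm.2)
  rintro _ ⟨m, ⟨-, j, rfl⟩, rfl⟩
  exact ⟨j + 1, by omega, by ring⟩

/-- Upper bounds on the values at a fixed set pass to pointwise cluster points. -/
theorem le_of_mapClusterPt {u : ℕ → Set ℕ → ℝ} {ν : Set ℕ → ℝ} (h : MapClusterPt ν atTop u)
    {W : Set ℕ} {c : ℝ} (hc : ∀ n, u n W ≤ c) : ν W ≤ c := by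
  have hcl : IsClosed {f : Set ℕ → ℝ | f W ≤ c} :=
    isClosed_le (continuous_apply W) continuous_const
  exact hcl.mem_of_mapClusterPt h (Eventually.of_forall hc)

theorem stmt_2
    (φ : Set ℕ → ℝ) (hφ : IsCharge φ) (hφd : ∀ n : ℕ, φ {n} = 0)
    (hφt : IsTransInv φ)
    (hφE0 : φ (E 0) = 1 / 2)
    (hφEn : ∀ n : ℕ, 1 ≤ n → φ (E n) = (1 / 2 : ℝ) ^ n)
    (μstar : Set ℕ → ℝ)
    (hμstar : MapClusterPt μstar atTop (fun n => muN φ (n + 1)))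
    (μ : Set ℕ → ℝ)
    (hμ : ∀ W : Set ℕ, μ W = (1 / 2) * mu0 φ W + (1 / 2) * μstar W)
    (W : Set ℕ)
    (hW : ∀ k : ℕ, 1 ≤ k → ¬(2 * k - 1 ∈ W ∧ 2 * k ∈ W)) :
    ¬(mu0 φ W = 1 ∧ μstar W = 1) ∧ μ W < 1 := by
  have hE1 : φ (E 1) = 1 / 2 := by simpa using hφEn 1 le_rfl
  have h0 : mu0 φ W ≤ 1 := by
    have := hφ.mono (Set.inter_subset_right : W ∩ E 0 ⊆ E 0)
    unfold mu0
    linarith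
  have hs : μstar W ≤ 1 := by
    refine le_of_mapClusterPt hμstar fun n => ?_
    calc muN φ (n + 1) W ≤ 2 ^ (n + 1) * φ (E (n + 1)) :=
          mul_le_mul_of_nonneg_left (hφ.mono Set.inter_subset_right) (by positivity)
      _ = 1 := by rw [hφEn (n + 1) (by omega), ← mul_pow]; norm_num
  have hnot : ¬(mu0 φ W = 1 ∧ μstar W = 1) := by
    rintro ⟨h1, h2⟩
    have : μstar W ≤ 0 := by
      refine le_of_mapClusterPt hμstar fun n => ?_
      have := phi_inter_E_add_le hφ hφt hW n
      unfold mu0 at h1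
      exact mul_nonpos_of_nonneg_of_nonpos (by positivity) (by linarith)
    linarith
  refine ⟨hnot, ?_⟩
  rw [hμ]
  by_contra hge
  exact hnot ⟨by linarith, by linarith⟩
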